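/- arXiv:2501.08684 — 2 statements merged into one kernel-verified Lean document; each statement's English description precedes it below -/
import Mathlib

section
/- For the corrected BFO rule, the switch count is non-increasing: for every odd cyclic configuration x, s(F(x)) ≤ s(x). -/
/-- The parity (XOR of all cells) of a cyclic binary configuration. -/
def Par {n : ℕ} [NeZero n] (x : ZMod n → Bool) : ZMod 2 :=
  ∑ i : ZMod n, if x i then 1 else 0

/-- The global CA rule induced by a local rule of radius `r`
on cyclic configurations of length `n`. -/
def globalRule (r : ℕ) (f : (Fin (2*r+1) → Bool) → Bool) {n : ℕ}
    (x : ZMod n → Bool) : ZMod n → Bool :=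
  fun i => f (fun j => x (i + ((j : ℕ) : ZMod n) - (r : ZMod n)))

/-- The active (center-flipping) neighbourhoods of the corrected BFO rule
(transitions T1–T12; the center is cell 4 of 9). -/
def bfoActive (w : Fin 9 → Bool) : Bool :=
  (w 1 && w 2 && w 3 && !w 4 && !w 5) ||               -- T1
  (w 0 && w 1 && w 2 && !w 3 && !w 4) ||               -- T2
  (!w 1 && !w 2 && w 3 && !w 4 && !w 5) ||             -- T3
  (!w 0 && !w 1 && w 2 && !w 3 && !w 4) ||             -- T4
  (!w 3 && w 4 && w 5 && !w 6) ||                      -- T5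
  (!w 2 && w 3 && w 4 && !w 5) ||                      -- T6
  (!w 1 && !w 2 && w 3 && !w 4 && w 5 && !w 6) ||      -- T7
  (!w 2 && !w 3 && w 4 && !w 5 && w 6 && !w 7) ||      -- T8
  (w 3 && w 4 && w 5 && !w 6 && w 7) ||                -- T9
  (w 0 && w 1 && w 2 && !w 3 && w 4 && !w 5) ||        -- T10
  (w 0 && w 1 && w 2 && !w 3 && w 4 && w 5 && w 6) ||  -- T11
  (w 2 && w 3 && w 4 && !w 5 && w 6 && w 7 && !w 8)    -- T12

/-- The corrected BFO local rule (radius 4). -/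
def bfoLocal (w : Fin 9 → Bool) : Bool := xor (bfoActive w) (w 4)

/-- The global rule induced by the corrected BFO rule. -/
def bfoGlobal {n : ℕ} (x : ZMod n → Bool) : ZMod n → Bool :=
  globalRule 4 bfoLocal x

/-- `x i x (i+1)` is a box: the pattern 01 preceded by 1 and followed by 00. -/
def IsBox {n : ℕ} (x : ZMod n → Bool) (i : ZMod n) : Prop :=
  x (i-1) = true ∧ x i = false ∧ x (i+1) = true ∧ x (i+2) = false ∧ x (i+3) = false

/-- Cell `j` belongs to some box of `x`. -/
def InBox {n : ℕ} (x : ZMod n → Bool) (j : ZMod n) : Prop :=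
  ∃ i, IsBox x i ∧ (j = i ∨ j = i + 1)

/-- `x` has a switch at position `i`: either a b-switch (a box at `i+1`)
or an r-switch (`x i ≠ x (i+1)` with neither cell in a box). -/
def IsSwitch {n : ℕ} (x : ZMod n → Bool) (i : ZMod n) : Prop :=
  IsBox x (i+1) ∨ (x i ≠ x (i+1) ∧ ¬ InBox x i ∧ ¬ InBox x (i+1))

/-- The number of switches of the configuration `x`. -/
noncomputable def switchCount {n : ℕ} (x : ZMod n → Bool) : ℕ :=
  Nat.card {i : ZMod n // IsSwitch x i}

/-- The block of length `2k+2` starting at position `i` is an ordered block. -/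
def IsOrderedBlock {n : ℕ} (x : ZMod n → Bool) (i : ZMod n) (k : ℕ) : Prop :=
  (∀ j ≤ k, ¬ (x (i + 2*j) = true ∧ x (i + 2*j + 1) = false)) ∧
  (x i = false ∧ x (i+1) = true) ∧
  ¬ (x (i + 2*k) = false ∧ x (i + 2*k + 1) = true) ∧
  (x (i + 2*k) = true ∧ x (i + 2*k + 1) = true → x (i + 2*k + 2) = false)

/-- An ordered block which is not a proper sub-block of another ordered block. -/
def IsMaximalOrderedBlock {n : ℕ} (x : ZMod n → Bool) (i : ZMod n) (k : ℕ) : Prop :=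
  IsOrderedBlock x i k ∧
  ∀ (i' : ZMod n) (k' d : ℕ), IsOrderedBlock x i' k' →
    i = i' + 2*d → 2*d + 2*k + 2 ≤ 2*k' + 2 → d = 0 ∧ k = k'

/-- `x` contains the word `w` starting at position `i`. -/
def ContainsAt {n : ℕ} (x : ZMod n → Bool) (i : ZMod n) (w : List Bool) : Prop :=
  ∀ j : Fin w.length, x (i + ((j : ℕ) : ZMod n)) = w.get j

/-- `x` belongs to `X_s`: the switch count is constant during the whole evolution
under the corrected BFO rule. -/
def InXs {n : ℕ} (x : ZMod n → Bool) : Prop :=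
  ∀ t : ℕ, switchCount (bfoGlobal^[t] x) = switchCount x

/-- Membership of the neighbourhood of cell `i` in one of the AT pairs
`T_{1,2}`, `T_{3,4}` (center at `i`). -/
def MatchT1234 {n : ℕ} (y : ZMod n → Bool) (i : ZMod n) : Prop :=
  (y (i-3) = true ∧ y (i-2) = true ∧ y (i-1) = true ∧ y i = false ∧ y (i+1) = false) ∨
  (y (i-4) = true ∧ y (i-3) = true ∧ y (i-2) = true ∧ y (i-1) = false ∧ y i = false) ∨
  (y (i-3) = false ∧ y (i-2) = false ∧ y (i-1) = true ∧ y i = false ∧ y (i+1) = false) ∨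
  (y (i-4) = false ∧ y (i-3) = false ∧ y (i-2) = true ∧ y (i-1) = false ∧ y i = false)

/-- The `k`-fold concatenation of a configuration of length `n`. -/
def concatK {n : ℕ} (k : ℕ) (x : ZMod n → Bool) : ZMod (k*n) → Bool :=
  fun i => x ((i.val : ZMod n))

/-!
Along a cycle the patterns 01 and 10 alternate, and every box uses up one of each, so the number of
switches is twice the number of patterns 01 that are not boxes: the *free rises*. Going left from a
free rise of `F(x)`, one meets a free rise of `x` after at most three cells, and all the cells
passed on the way are 0 in `F(x)`. Hence no other rise of `F(x)` lies in between, and this tracing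
back injects the free rises of `F(x)` into those of `x`.
-/

/-- A rise of `x` at `i`: the pattern 01 on the cells `i` and `i + 1`. -/
def IsRise {n : ℕ} (x : ZMod n → Bool) (i : ZMod n) : Prop :=
  x i = false ∧ x (i + 1) = true

/-- A fall of `x` at `i`: the pattern 10 on the cells `i` and `i + 1`. -/
def IsFall {n : ℕ} (x : ZMod n → Bool) (i : ZMod n) : Prop :=
  x i = true ∧ x (i + 1) = false

/-- A free rise of `x` at `i`: a rise which is not a box. The free rises are the r-switches of the
form 01; they serve to count all switches. -/
def IsFreeRise {n : ℕ} (x : ZMod n → Bool) (i : ZMod n) : Prop :=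
  IsRise x i ∧ ¬ IsBox x i

theorem ncard_le_ncard_of_exists_sub_natCast_mem {R : Type*} [AddCommGroupWithOne R]
    {S T : Set R} (hT : T.Finite)
    (h : ∀ i ∈ S, ∃ d : ℕ, i - d ∈ T ∧ ∀ e : ℕ, 0 < e → e ≤ d → i - e ∉ S) :
    S.ncard ≤ T.ncard := by
  choose! d hdT hdS using h
  have hle : ∀ i ∈ S, ∀ j ∈ S, i - d i = j - d j → d j ≤ d i := by
    intro i hi j hj hij
    by_contra! hlt
    have hji : j - (d j - d i : ℕ) = i := by
      rw [Nat.cast_sub hlt.le, sub_sub_eq_add_sub, add_sub_right_comm, ← hij, sub_add_cancel]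
    refine hdS j hj (d j - d i) (by lia) (by lia) ?_
    rwa [hji]
  refine Set.ncard_le_ncard_of_injOn (fun i ↦ i - d i) hdT (fun i hi j hj hij ↦ ?_) hT
  have hd : d i = d j := (hle j hj i hi hij.symm).antisymm (hle i hi j hj hij)
  simpa [hd] using hij

section Counting

variable {n : ℕ} {x : ZMod n → Bool} {i : ZMod n}

theorem inBox_iff : InBox x i ↔ IsBox x i ∨ IsBox x (i - 1) := by
  constructor
  · rintro ⟨j, hj, rfl | rfl⟩
    · exact .inl hj
    · exact .inr (by simpa using hj)
  · rintro (h | h)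
    · exact ⟨i, h, .inl rfl⟩
    · exact ⟨i - 1, h, .inr (by ring)⟩

theorem isSwitch_iff : IsSwitch x i ↔ IsFreeRise x i ∨ (IsFall x i ∧ ¬ IsBox x (i - 1)) := by
  simp only [IsSwitch, IsFreeRise, IsRise, IsFall, inBox_iff, IsBox]
  ring_nf
  grind

theorem IsBox.isRise (h : IsBox x i) : IsRise x i :=
  ⟨h.2.1, h.2.2.1⟩

theorem IsBox.isFall_add_one (h : IsBox x i) : IsFall x (i + 1) :=
  ⟨h.2.2.1, by simpa [add_assoc, one_add_one_eq_two] using h.2.2.2.1⟩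

theorem IsFreeRise.prev_eq_false (h : IsFreeRise x i) (h₂ : x (i + 2) = false)
    (h₃ : x (i + 3) = false) : x (i - 1) = false := by
  by_contra hleft
  exact h.2 ⟨Bool.eq_true_of_not_eq_false hleft, h.1.1, h.1.2, h₂, h₃⟩

variable [NeZero n]

theorem ncard_isRise_eq_ncard_isFall (x : ZMod n → Bool) :
    {i | IsRise x i}.ncard = {i | IsFall x i}.ncard := by
  have hshift : {i | x (i + 1) = true}.ncard = {i | x i = true}.ncard :=
    Set.ncard_preimage_of_injective_subset_range (f := (· + 1)) (s := {i | x i = true})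
      (add_left_injective 1) fun i _ ↦ ⟨i - 1, sub_add_cancel i 1⟩
  convert (Set.ncard_eq_ncard_iff_ncard_sdiff_eq_ncard_sdiff (Set.toFinite _)
    (Set.toFinite _)).1 hshift using 2 <;> ext i <;> simp [IsRise, IsFall, and_comm]

theorem switchCount_eq_two_mul_ncard_isFreeRise (x : ZMod n → Bool) :
    switchCount x = 2 * {i | IsFreeRise x i}.ncard := by
  have hswitch : {i | IsSwitch x i} =
      {i | IsFreeRise x i} ∪ ({i | IsFall x i} \ (· + 1) '' {i | IsBox x i}) := by
    ext i
    simp [isSwitch_iff, sub_eq_add_neg]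
  have hdisj : Disjoint {i | IsFreeRise x i} ({i | IsFall x i} \ (· + 1) '' {i | IsBox x i}) :=
    Set.disjoint_left.2 fun i hr hf ↦ by simp_all [IsFreeRise, IsRise, IsFall]
  have hrise : {i | IsFreeRise x i}.ncard = {i | IsRise x i}.ncard - {i | IsBox x i}.ncard :=
    Set.ncard_sdiff fun _ ↦ IsBox.isRise
  have hfall : ({i | IsFall x i} \ (· + 1) '' {i | IsBox x i}).ncard =
      {i | IsFall x i}.ncard - {i | IsBox x i}.ncard := by
    rw [Set.ncard_sdiff (Set.image_subset_iff.2 fun _ ↦ IsBox.isFall_add_one),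
      Set.ncard_image_of_injective _ (add_left_injective 1)]
  calc
    switchCount x = {i | IsSwitch x i}.ncard := rfl
    _ = 2 * {i | IsFreeRise x i}.ncard := by
      rw [hswitch, Set.ncard_union_eq hdisj, hfall, ← ncard_isRise_eq_ncard_isFall, ← hrise,
        two_mul]

end Counting

section Dynamics

variable {n : ℕ} {x : ZMod n → Bool} {i : ZMod n}

theorem containsAt_nil : ContainsAt x i [] := by
  simp [ContainsAt]

theorem containsAt_cons {b : Bool} {w : List Bool} :
    ContainsAt x i (b :: w) ↔ x i = b ∧ ContainsAt x (i + 1) w := by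
  simp [ContainsAt, Fin.forall_fin_succ, add_assoc, add_comm (1 : ZMod n)]

theorem bfoGlobal_apply (x : ZMod n → Bool) (i : ZMod n) :
    bfoGlobal x i = bfoLocal ![x (i - 4), x (i - 3), x (i - 2), x (i - 1), x i,
      x (i + 1), x (i + 2), x (i + 3), x (i + 4)] := by
  unfold bfoGlobal globalRule
  congr 1
  ext j
  fin_cases j <;> exact congrArg x (by push_cast; ring)

-- The disjuncts are T1 and T3, T2 and T4, and T7.
theorem containsAt_of_eq_false_of_bfoGlobal_eq_true (h : x i = false)
    (hF : bfoGlobal x i = true) :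
    (∃ a, ContainsAt x (i - 3) [a, a, true, false, false]) ∨
    (∃ a, ContainsAt x (i - 4) [a, a, true, false, false]) ∨
    ContainsAt x (i - 3) [false, false, true, false, true, false] := by
  simp only [bfoGlobal_apply, bfoLocal, bfoActive, Matrix.cons_val] at hF
  simp only [containsAt_cons, containsAt_nil, Bool.exists_bool]
  ring_nf at hF ⊢
  grind

-- The disjuncts are T5, T9 and T11.
theorem containsAt_of_eq_true_of_bfoGlobal_eq_false_of_next_eq_true (h : x i = true)
    (hnext : x (i + 1) = true) (hF : bfoGlobal x i = false) :
    ContainsAt x (i - 1) [false, true, true, false] ∨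
    ContainsAt x (i - 1) [true, true, true, false, true] ∨
    ContainsAt x (i - 4) [true, true, true, false, true, true, true] := by
  simp only [bfoGlobal_apply, bfoLocal, bfoActive, Matrix.cons_val] at hF
  simp only [containsAt_cons, containsAt_nil]
  ring_nf at hnext hF ⊢
  grind

-- The disjuncts are T6, T8, T10 and T12.
theorem containsAt_of_eq_true_of_bfoGlobal_eq_false_of_next_eq_false (h : x i = true)
    (hnext : x (i + 1) = false) (hF : bfoGlobal x i = false) :
    ContainsAt x (i - 2) [false, true, true, false] ∨
    ContainsAt x (i - 2) [false, false, true, false, true, false] ∨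
    ContainsAt x (i - 4) [true, true, true, false, true, false] ∨
    ContainsAt x (i - 2) [true, true, true, false, true, true, false] := by
  simp only [bfoGlobal_apply, bfoLocal, bfoActive, Matrix.cons_val] at hF
  simp only [containsAt_cons, containsAt_nil]
  ring_nf at hnext hF ⊢
  grind

theorem bfoGlobal_eq_true_of_containsAt_aa100 {a : Bool}
    (h : ContainsAt x i [a, a, true, false, false]) :
    bfoGlobal x (i + 2) = true ∧ bfoGlobal x (i + 3) = true := by
  simp only [containsAt_cons] at h
  simp only [bfoGlobal_apply, bfoLocal, bfoActive, Matrix.cons_val]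
  ring_nf at h ⊢
  cases a <;> simp [h]

theorem bfoGlobal_eq_false_of_containsAt_0110 (h : ContainsAt x i [false, true, true, false]) :
    bfoGlobal x (i + 1) = false ∧ bfoGlobal x (i + 2) = false := by
  simp only [containsAt_cons] at h
  simp only [bfoGlobal_apply, bfoLocal, bfoActive, Matrix.cons_val]
  ring_nf at h ⊢
  simp [h]

theorem bfoGlobal_eq_false_of_containsAt_11101
    (h : ContainsAt x i [true, true, true, false, true]) :
    bfoGlobal x (i + 3) = false ∧ bfoGlobal x (i + 4) = false := by
  simp only [containsAt_cons] at h
  simp only [bfoGlobal_apply, bfoLocal, bfoActive, Matrix.cons_val]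
  ring_nf at h ⊢
  grind

theorem IsBox.bfoGlobal_eq_false (h : IsBox x i) :
    bfoGlobal x (i + 2) = false ∧ bfoGlobal x (i + 3) = false := by
  simp only [IsBox] at h
  simp only [bfoGlobal_apply, bfoLocal, bfoActive, Matrix.cons_val]
  ring_nf at h ⊢
  simp [h]

-- Only T7 and T8 can produce such a rise: 001010 becomes 000110.
theorem isFreeRise_sub_one_of_isRise_bfoGlobal (h : IsRise (bfoGlobal x) i)
    (hx : x (i + 1) = false) : IsFreeRise x (i - 1) := by
  obtain ⟨a, hT13⟩ | ⟨a, hT24⟩ | hT7 := containsAt_of_eq_false_of_bfoGlobal_eq_true hx h.2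
  · have hF := (bfoGlobal_eq_true_of_containsAt_aa100 hT13).1
    rw [show i + 1 - 3 + 2 = i by ring] at hF
    simp [h.1] at hF
  · have hF := (bfoGlobal_eq_true_of_containsAt_aa100 hT24).2
    rw [show i + 1 - 4 + 3 = i by ring] at hF
    simp [h.1] at hF
  · simp only [containsAt_cons] at hT7
    simp only [IsFreeRise, IsRise, IsBox]
    ring_nf at hT7 ⊢
    simp [hT7]

-- 1110111 becomes 1010011 or, when followed by 01, 1010001.
theorem isFreeRise_of_isFreeRise_bfoGlobal_of_eq_true (h : IsFreeRise (bfoGlobal x) i)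
    (hx : x i = true) (hx' : x (i + 1) = true) :
    IsFreeRise x (i - 1) ∨ (IsFreeRise x (i - 2) ∧ bfoGlobal x (i - 1) = false) := by
  obtain hT5 | hT9 | hT11 :=
    containsAt_of_eq_true_of_bfoGlobal_eq_false_of_next_eq_true hx hx' h.1.1
  · have hF := (bfoGlobal_eq_false_of_containsAt_0110 hT5).2
    rw [show i - 1 + 2 = i + 1 by ring] at hF
    simp [h.1.2] at hF
  · right
    have hleft : bfoGlobal x (i - 1) = false := by
      have hF := bfoGlobal_eq_false_of_containsAt_11101 hT9
      rw [show i - 1 + 3 = i + 2 by ring, show i - 1 + 4 = i + 3 by ring] at hF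
      exact h.prev_eq_false hF.1 hF.2
    have hT11 := containsAt_of_eq_true_of_bfoGlobal_eq_false_of_next_eq_true
      (containsAt_cons.1 hT9).1 (by simpa using hx) hleft
    refine ⟨?_, hleft⟩
    simp only [containsAt_cons] at hT9 hT11
    simp only [IsFreeRise, IsRise, IsBox]
    ring_nf at hT9 hT11 ⊢
    grind
  · left
    simp only [containsAt_cons] at hT11
    simp only [IsFreeRise, IsRise, IsBox]
    ring_nf at hT11 ⊢
    simp [hT11]

-- A box loses its left neighbour in 0110100, which becomes 0000100, and in 111010100, which
-- becomes 101000100.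
theorem IsBox.isFreeRise_of_isFreeRise_bfoGlobal (hbox : IsBox x i)
    (h : IsFreeRise (bfoGlobal x) i) :
    (IsFreeRise x (i - 2) ∧ bfoGlobal x (i - 1) = false) ∨
    (IsFreeRise x (i - 3) ∧ bfoGlobal x (i - 1) = false ∧ bfoGlobal x (i - 2) = false) := by
  have hleft : bfoGlobal x (i - 1) = false :=
    h.prev_eq_false hbox.bfoGlobal_eq_false.1 hbox.bfoGlobal_eq_false.2
  obtain hT6 | hword := containsAt_of_eq_true_of_bfoGlobal_eq_false_of_next_eq_false hbox.1
    (by simpa using hbox.2.1) hleft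
  · right
    have hF := (bfoGlobal_eq_false_of_containsAt_0110 hT6).1
    rw [show i - 1 - 2 + 1 = i - 2 by ring] at hF
    refine ⟨?_, hleft, hF⟩
    simp only [containsAt_cons] at hT6
    simp only [IsFreeRise, IsRise, IsBox]
    ring_nf at hT6 ⊢
    simp [hT6]
  · left
    refine ⟨?_, hleft⟩
    simp only [containsAt_cons, IsBox] at hword hbox
    simp only [IsFreeRise, IsRise, IsBox]
    ring_nf at hword hbox ⊢
    grind

theorem exists_isFreeRise_sub_of_isFreeRise_bfoGlobal (h : IsFreeRise (bfoGlobal x) i) :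
    ∃ d : ℕ, IsFreeRise x (i - d) ∧ ∀ e < d, bfoGlobal x (i - e) = false := by
  cases hx' : x (i + 1) with
  | false =>
    exact ⟨1, by simpa using isFreeRise_sub_one_of_isRise_bfoGlobal h.1 hx', by simp [h.1.1]⟩
  | true =>
    cases hx : x i with
    | true =>
      obtain hd | ⟨hd, h₁⟩ := isFreeRise_of_isFreeRise_bfoGlobal_of_eq_true h hx hx'
      · exact ⟨1, by simpa using hd, by simp [h.1.1]⟩
      · exact ⟨2, hd, fun e he ↦ by interval_cases e <;> simp [h.1.1, h₁]⟩
    | false =>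
      by_cases hbox : IsBox x i
      · obtain ⟨hd, h₁⟩ | ⟨hd, h₁, h₂⟩ := hbox.isFreeRise_of_isFreeRise_bfoGlobal h
        · exact ⟨2, hd, fun e he ↦ by interval_cases e <;> simp [h.1.1, h₁]⟩
        · exact ⟨3, hd, fun e he ↦ by interval_cases e <;> simp [h.1.1, h₁, h₂]⟩
      · exact ⟨0, by simpa using ⟨⟨hx, hx'⟩, hbox⟩, by simp⟩

end Dynamics

theorem ncard_isFreeRise_bfoGlobal_le {n : ℕ} [NeZero n] (x : ZMod n → Bool) :
    {i | IsFreeRise (bfoGlobal x) i}.ncard ≤ {i | IsFreeRise x i}.ncard := by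
  refine ncard_le_ncard_of_exists_sub_natCast_mem (Set.toFinite _) fun i hi ↦ ?_
  obtain ⟨d, hd, hzero⟩ := exists_isFreeRise_sub_of_isFreeRise_bfoGlobal hi
  refine ⟨d, hd, fun e he hed hrise ↦ ?_⟩
  have hF : bfoGlobal x (i - e + 1) = false := by
    simpa [Nat.cast_sub he, sub_add] using hzero (e - 1) (by lia)
  simp [hrise.1.2] at hF

theorem bfo_switchCount_nonincreasing_general {n : ℕ} [NeZero n] (x : ZMod n → Bool) :
    switchCount (bfoGlobal x) ≤ switchCount x := by
  rw [switchCount_eq_two_mul_ncard_isFreeRise, switchCount_eq_two_mul_ncard_isFreeRise]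
  exact Nat.mul_le_mul_left 2 (ncard_isFreeRise_bfoGlobal_le x)

/-- For the corrected BFO rule the switch count is non-increasing. -/
theorem bfo_switchCount_nonincreasing (n : ℕ) (hn : Odd n) (x : ZMod n → Bool) :
    switchCount (bfoGlobal x) ≤ switchCount x :=
  have : NeZero n := ⟨hn.pos.ne'⟩
  bfo_switchCount_nonincreasing_general x
end

section
/- If x is an odd cyclic configuration whose switch count is constant under all iterations of the corrected BFO rule (x ∈ X_s), then x contains no ordered block. -/
/-!
Call a `01` which does not form a box a *wall*. Upward and downward switches alternate, and the
upward ones are exactly the walls, so the switch count is twice the number of walls. The walls obey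
a local balance inequality; summing it shows that their number never increases, and that it
decreases strictly as soon as one of a few *lossy* patterns occurs. A configuration in `X_s` thus
avoids these patterns at all times, and if its length is odd it avoids long alternating patterns as
well.

Under these constraints the rule is tame on a block `1 [0…0] [1…1] 0` of odd total length: the wall
between its zeros and its ones stays in place, and the parities of the two runs are preserved. If
the zeros are even in number, then from some time on they either lose two cells in each step or gain
two cells in each step, depending on whether a box precedes the block; if the ones are even in
number, the same holds for them, depending on whether a box follows the block. Neither can go on for
ever, so all blocks have even length. But a non-constant configuration of odd period is cut by its
descents into blocks, not all of which can be even; so the configuration is constant.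
-/

namespace BFO

/-! ### Patterns -/

/-- A constraint on the value of one cell: `O` forces `0`, `I` forces `1`, `X` is a wildcard. -/
inductive Cell
  | O | I | X

open Cell

/-- The values allowed by a cell constraint. -/
def Cell.allows : Cell → Bool → Bool
  | O, b => !b
  | I, b => b
  | X, _ => true

/-- Conjunction over the values allowed by a cell constraint. -/
def Cell.forAll : Cell → (Bool → Bool) → Bool
  | O, k => k false
  | I, k => k true
  | X, k => k false && k true

theorem Cell.forAll_apply {c : Cell} {k : Bool → Bool} (h : c.forAll k = true) {b : Bool}
    (hb : c.allows b = true) : k b = true := by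
  cases c <;> cases b <;> simp_all [forAll, allows]

/-- The word starts with an instance of the pattern. -/
def fits : List Cell → List Bool → Bool
  | [], _ => true
  | _ :: _, [] => false
  | c :: p, b :: w => c.allows b && fits p w

/-- The word starts with an instance of one of the patterns. -/
def fitsAny (ps : List (List Cell)) (w : List Bool) : Bool := ps.any (fits · w)

variable {A : Type*} [AddCommGroupWithOne A]

/-- The cells `i, i + 1, …, i + m - 1` of a configuration. Positions lie in `ZMod n` when cells are
counted and in `ℤ` when they are compared, whence the generality. -/
def word (y : A → Bool) (i : A) : ℕ → List Bool
  | 0 => []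
  | m + 1 => y i :: word y (i + 1) m

/-- The pattern occurs in the configuration at position `i`. -/
def occurs (y : A → Bool) (i : A) : List Cell → Bool
  | [] => true
  | c :: p => c.allows (y i) && occurs y (i + 1) p

/-- No pattern of the list occurs in the configuration. -/
def Avoids (ps : List (List Cell)) (y : A → Bool) : Prop :=
  ∀ i, ∀ p ∈ ps, occurs y i p = false

theorem fits_word {y : A → Bool} {p : List Cell} {i : A} {m : ℕ} (hm : p.length ≤ m) :
    fits p (word y i m) = occurs y i p := by
  induction p generalizing i m with
  | nil => rfl
  | cons c p ih =>
    obtain ⟨m, rfl⟩ : ∃ k, m = k + 1 := ⟨m - 1, by grind⟩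
    simp only [word, fits, occurs, ih (Nat.le_of_succ_le_succ hm)]

theorem fitsAny_word_eq_any {ps : List (List Cell)} {y : A → Bool} {i : A} {m : ℕ}
    (h : ∀ p ∈ ps, p.length ≤ m) :
    fitsAny ps (word y i m) = ps.any (occurs y i) := by
  rw [Bool.eq_iff_iff, fitsAny, List.any_eq_true, List.any_eq_true]
  exact exists_congr fun p => and_congr_right fun hp => by rw [fits_word (h p hp)]

theorem occurs_of_fits {y : A → Bool} {p : List Cell} {i : A} {m : ℕ}
    (h : fits p (word y i m) = true) : occurs y i p = true := by
  induction p generalizing i m with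
  | nil => rfl
  | cons c p ih =>
    cases m with
    | zero => simp [word, fits] at h
    | succ m =>
      simp only [word, fits, occurs, Bool.and_eq_true] at h ⊢
      exact ⟨h.1, ih h.2⟩

theorem avoids_nil (y : A → Bool) : Avoids [] y := by simp [Avoids]

theorem Avoids.fitsAny_word {ps : List (List Cell)} {y : A → Bool} (h : Avoids ps y) (i : A)
    (m : ℕ) : fitsAny ps (word y i m) = false := by
  rw [fitsAny, List.any_eq_false]
  intro p hp hfit
  exact absurd (occurs_of_fits hfit) (by simp [h i p hp])

theorem drop_word (y : A → Bool) (i : A) (k m : ℕ) :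
    (word y i m).drop k = word y (i + k) (m - k) := by
  induction k generalizing i m with
  | zero => simp
  | succ k ih =>
    cases m with
    | zero => simp [word]
    | succ m => simp [word, ih, add_assoc, add_comm (1 : A)]

/-- The pattern with `l` wildcards added on its left and `r` on its right. -/
def pad (l r : ℕ) (p : List Cell) : List Cell :=
  .replicate l X ++ (p ++ .replicate r X)

theorem occurs_replicate_append (y : A → Bool) (i : A) (l : ℕ) (p : List Cell) :
    occurs y i (.replicate l X ++ p) = occurs y (i + l) p := by
  induction l generalizing i with
  | zero => simp
  | succ l ih => simp [List.replicate_succ, occurs, Cell.allows, ih, add_assoc, add_comm (1 : A)]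

theorem occurs_append_replicate (y : A → Bool) (i : A) (p : List Cell) (r : ℕ) :
    occurs y i (p ++ .replicate r X) = occurs y i p := by
  induction p generalizing i with
  | nil => simpa [occurs] using occurs_replicate_append y i r []
  | cons c p ih => simp [occurs, ih]

theorem occurs_pad (y : A → Bool) (i : A) (l r : ℕ) (p : List Cell) :
    occurs y i (pad l r p) = occurs y (i + l) p := by
  rw [pad, occurs_replicate_append, occurs_append_replicate]

theorem length_pad (l r : ℕ) (p : List Cell) : (pad l r p).length = l + p.length + r := by
  simp [pad, add_assoc]

/-! ### The rule on words -/

/-- One step of the corrected BFO rule. -/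
def step (y : A → Bool) (i : A) : Bool :=
  bfoLocal fun j => y (i + ((j : ℕ) : A) - ((4 : ℕ) : A))

/-- Prepends to `v` the successor of the fifth letter of a word of at least nine letters, and passes
the result on to `k`; branching on that successor makes `k` receive a literal word. -/
def pushImage (v : List Bool) (k : List Bool → Bool) : List Bool → Bool
  | a :: b :: c :: d :: e :: f :: g :: h :: i :: _ =>
      bif bfoLocal ![a, b, c, d, e, f, g, h, i] then k (true :: v) else k (false :: v)
  | _ => k v

theorem step_add_four (y : A → Bool) (i : A) :
    step y (i + 4) = bfoLocal ![y i, y (i + 1), y (i + 2), y (i + 3), y (i + 4), y (i + 5),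
      y (i + 6), y (i + 7), y (i + 8)] := by
  unfold step
  congr 1
  funext j
  have : i + 4 + ((j : ℕ) : A) - ((4 : ℕ) : A) = i + ((j : ℕ) : A) := by push_cast; abel
  rw [this]
  fin_cases j <;> simp

theorem pushImage_word (y : A → Bool) (i : A) (k : List Bool → Bool) (m : ℕ) :
    pushImage (word (step y) (i + 1 + 4) (m - 8)) k (word y i (m + 1)) =
      k (word (step y) (i + 4) (m + 1 - 8)) := by
  obtain hm | ⟨r, rfl⟩ : m < 8 ∨ ∃ r, m = r + 8 := by
    rcases lt_or_ge m 8 with h | h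
    · exact .inl h
    · exact .inr ⟨m - 8, by omega⟩
  · interval_cases m <;> rfl
  · have branch (b : Bool) (v : List Bool) :
        (bif b then k (true :: v) else k (false :: v)) = k (b :: v) := by cases b <;> rfl
    rw [Nat.add_sub_cancel, Nat.add_right_comm, Nat.add_sub_cancel]
    simp only [word, pushImage, branch, step_add_four, add_assoc]
    norm_num

/-- Runs through the words `w` of the pattern and their images `v` under the rule, leaving out those
in which a forbidden pattern occurs, and checks `k w v`. -/
def explore (ps : List (List Cell)) : List Cell → (List Bool → List Bool → Bool) → Bool
  | [], k => k [] []
  | c :: p, k => explore ps p fun w v => c.forAll fun b =>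
      fitsAny ps (b :: w) || pushImage v (fun v => fitsAny ps v || k (b :: w) v) (b :: w)

theorem explore_sound {ps : List (List Cell)} {y : A → Bool} (hy : Avoids ps y)
    (hy' : Avoids ps (step y)) {p : List Cell} {k : List Bool → List Bool → Bool}
    (h : explore ps p k = true) {i : A} (hp : occurs y i p = true) :
    k (word y i p.length) (word (step y) (i + 4) (p.length - 8)) = true := by
  induction p generalizing k i with
  | nil => exact h
  | cons c p ih =>
    simp only [occurs, Bool.and_eq_true] at hp
    have hc := Cell.forAll_apply (ih h hp.2) hp.1
    change (fitsAny ps (word y i (p.length + 1)) ||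
      pushImage _ _ (word y i (p.length + 1))) = true at hc
    rwa [pushImage_word, hy.fitsAny_word, hy'.fitsAny_word, Bool.false_or, Bool.false_or] at hc

/-! ### Conservation of walls -/

/-- Read from two cells before a wall, that is, before the `1` of a `01` which does not form a
box. -/
def wallPatterns : List (List Cell) :=
  [[O, O, I], [X, O, I, I], [X, O, I, X, I]]

/-- The number of walls at the single position `i + 2`. -/
def walls (y : A → Bool) (i : A) : ℕ :=
  (wallPatterns.any (occurs y i)).toNat

/-- Patterns in whose presence one step of the rule moves a wall to the right across a fixed point;
found by computer search. -/
def fluxPatterns : List (List Cell) :=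
  [[X, X, X, X, O, I, O, I, O], [X, X, X, X, O, I, I, O], [X, X, X, O, I, I, O],
    [X, X, O, I, I, O], [X, X, I, O, I, O, I, O], [X, O, I, I, O, O], [X, I, I, I, O, I, I],
    [I, I, I, O, X, I, I, O, I]]

/-- The number of walls which one step moves to the right across a fixed point, making
`flux y i - flux y (i + 1)` the net inflow at the position counted by `walls y (i + 4)`. -/
def flux (y : A → Bool) (i : A) : ℕ :=
  (fluxPatterns.any (occurs y i)).toNat

/-- Patterns at which one step loses a wall, each with its position in the window of thirteen cells
in which the loss is observed. -/
def lossyPatterns : List (ℕ × List Cell) :=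
  [(1, [O, I, I, O, O]), (2, [O, I, I, O, I, I]), (4, [I, O, I, O, I, I]),
    (2, [I, I, O, O, I, O, O]), (2, [I, I, O, O, I, I, I]), (1, [O, O, I, O, O, I, O, O]),
    (1, [O, O, I, O, O, I, I, I]), (1, [O, I, O, I, O, I, O, O]), (2, [I, I, O, O, I, O, I, I]),
    (1, [O, O, I, O, O, I, O, I, I]), (0, [O, I, I, O, I, O, I, O, O])]

section

variable (y : A → Bool) (i : A)

/-- The number of walls lost in `walls_step_add_flux_le`, read off a window `w` of cells and its
image `v` under the rule. -/
def wallBalance (w v : List Bool) : ℤ :=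
  (fitsAny wallPatterns (w.drop 4)).toNat + (fitsAny fluxPatterns w).toNat -
    ((fitsAny wallPatterns v).toNat + (fitsAny fluxPatterns (w.drop 1)).toNat)

theorem wallBalance_word :
    wallBalance (word y i 13) (word (step y) (i + 4) 5) =
      walls y (i + 4) + flux y i - (walls (step y) (i + 4) + flux y (i + 1)) := by
  simp only [wallBalance, drop_word]
  rw [fitsAny_word_eq_any, fitsAny_word_eq_any, fitsAny_word_eq_any, fitsAny_word_eq_any]
  · simp [walls, flux]
  all_goals decide

theorem walls_step_add_flux_le :
    walls (step y) (i + 4) + flux y (i + 1) ≤ walls y (i + 4) + flux y i := by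
  have check : explore [] (pad 0 13 []) (fun w v => 0 ≤ wallBalance w v) = true := by
    decide +kernel
  have balance := explore_sound (avoids_nil y) (avoids_nil _) check (i := i) (occurs_pad ..)
  rw [decide_eq_true_iff, length_pad] at balance
  linarith [balance.trans_eq (wallBalance_word y i)]

theorem walls_step_add_flux_lt {k : ℕ} {p : List Cell} (hkp : (k, p) ∈ lossyPatterns)
    (hp : occurs y (i + k) p = true) :
    walls (step y) (i + 4) + flux y (i + 1) < walls y (i + 4) + flux y i := by
  have check : ∀ q ∈ lossyPatterns, q.1 + q.2.length + (13 - q.1 - q.2.length) = 13 ∧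
      explore [] (pad q.1 (13 - q.1 - q.2.length) q.2) (fun w v => 0 < wallBalance w v) = true := by
    decide +kernel
  obtain ⟨length_eq, check⟩ := check _ hkp
  have balance := explore_sound (avoids_nil y) (avoids_nil _) check (i := i)
    ((occurs_pad ..).trans hp)
  rw [decide_eq_true_iff, length_pad, length_eq] at balance
  linarith [balance.trans_eq (wallBalance_word y i)]

end

/-! ### Switches and walls -/

theorem sum_comp_add_right {G M : Type*} [AddGroup G] [Fintype G] [AddCommMonoid M] (f : G → M)
    (c : G) : ∑ i, f (i + c) = ∑ i, f i :=
  Equiv.sum_comp (Equiv.addRight c) f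

section

variable {n : ℕ} (x : ZMod n → Bool)

theorem inBox_iff (j : ZMod n) : InBox x j ↔ IsBox x j ∨ IsBox x (j - 1) := by
  constructor
  · rintro ⟨i, hi, rfl | rfl⟩
    · exact .inl hi
    · exact .inr (by rwa [add_sub_cancel_right])
  · rintro (h | h)
    · exact ⟨j, h, .inl rfl⟩
    · exact ⟨j - 1, h, .inr (sub_add_cancel j 1).symm⟩

open Classical in
theorem ite_isSwitch_add (i : ZMod n) :
    (if IsSwitch x (i + 2) then 1 else 0) + (if IsBox x (i + 1) then 1 else 0) +
      (x (i + 3)).toNat =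
    2 * walls x (i + 1) + (if IsBox x (i + 2) then 1 else 0) + (x (i + 2)).toNat := by
  simp only [IsSwitch, inBox_iff, IsBox, walls, wallPatterns, occurs, Cell.allows, List.any_cons,
    List.any_nil, add_assoc, add_sub_assoc]
  norm_num only
  rw [add_zero]
  generalize x i = a, x (i + 1) = b, x (i + 2) = c, x (i + 3) = d, x (i + 4) = e, x (i + 5) = f,
    x (i + 6) = g
  revert a b c d e f g
  decide

variable [NeZero n]

theorem switchCount_eq_two_mul_sum_walls : switchCount x = 2 * ∑ i, walls x i := by
  classical
  have sum_eq := Finset.sum_congr (s₁ := .univ) rfl fun i _ => ite_isSwitch_add x i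
  simp only [Finset.sum_add_distrib, ← Finset.mul_sum] at sum_eq
  rw [sum_comp_add_right fun i => if IsSwitch x i then 1 else 0,
    sum_comp_add_right fun i => if IsBox x i then 1 else 0,
    sum_comp_add_right fun i => if IsBox x i then 1 else 0, sum_comp_add_right fun i => (x i).toNat,
    sum_comp_add_right fun i => (x i).toNat, sum_comp_add_right (walls x)] at sum_eq
  rw [switchCount, Nat.card_eq_fintype_card, Fintype.card_subtype, Finset.card_filter]
  omega

theorem avoids_lossy_of_sum_walls_step_eq (h : ∑ i, walls (step x) i = ∑ i, walls x i) :
    Avoids (lossyPatterns.map Prod.snd) x := by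
  intro i p hp
  obtain ⟨⟨k, p⟩, hkp, rfl⟩ := List.mem_map.1 hp
  by_contra occurs_p
  have sum_lt : ∑ i, (walls (step x) (i + 4) + flux x (i + 1)) <
      ∑ i, (walls x (i + 4) + flux x i) :=
    Finset.sum_lt_sum (fun i _ => walls_step_add_flux_le x i) ⟨i - k, Finset.mem_univ _,
      walls_step_add_flux_lt x _ hkp (by rwa [sub_add_cancel, ← Bool.not_eq_false])⟩
  rw [Finset.sum_add_distrib, Finset.sum_add_distrib, sum_comp_add_right,
    sum_comp_add_right (flux x), sum_comp_add_right, h] at sum_lt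
  exact sum_lt.false

end

/-! ### Steady configurations -/

section

variable {n : ℕ} {x : ZMod n → Bool}

theorem avoids_lossy_of_inXs [NeZero n] (hx : InXs x) (t : ℕ) :
    Avoids (lossyPatterns.map Prod.snd) (step^[t] x) := by
  have switchCount_eq (t : ℕ) : switchCount (step^[t] x) = switchCount x := hx t
  apply avoids_lossy_of_sum_walls_step_eq
  have := (switchCount_eq (t + 1)).trans (switchCount_eq t).symm
  rw [Function.iterate_succ_apply', switchCount_eq_two_mul_sum_walls,
    switchCount_eq_two_mul_sum_walls] at this
  omega

theorem occurs_intCast (x : A → Bool) (i : ℤ) (p : List Cell) :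
    occurs (fun j : ℤ => x j) i p = occurs x (i : A) p := by
  induction p generalizing i with
  | nil => rfl
  | cons c p ih => simp only [occurs, ih, Int.cast_add, Int.cast_one]

theorem step_intCast (x : A → Bool) : step (fun j : ℤ => x j) = fun j : ℤ => step x j := by
  funext j
  simp [step]

theorem iterate_step_intCast (x : A → Bool) (t : ℕ) :
    step^[t] (fun j : ℤ => x j) = fun j : ℤ => step^[t] x j :=
  (Function.Semiconj.iterate_right (f := fun (x : A → Bool) (j : ℤ) => x j)
    (fun x => (step_intCast x).symm) t x).symm

end

/-- Patterns which never occur in the orbits under study: besides the lossy ones, the long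
alternating ones, which in the absence of lossy patterns would fill a whole period of odd length. -/
def forbiddenPatterns : List (List Cell) :=
  [I, O, I, O, I, O, I] :: [O, I, O, I, O, I, O] :: lossyPatterns.map Prod.snd

/-- A configuration of odd period whose walls are conserved by the rule, as expressed by the absence
of lossy patterns at all times. -/
structure IsSteady (n : ℕ) (y : ℤ → Bool) : Prop where
  odd : Odd n
  periodic : Function.Periodic y n
  avoids_lossy : ∀ t, Avoids (lossyPatterns.map Prod.snd) (step^[t] y)

theorem isSteady_of_inXs {n : ℕ} (hn : Odd n) {x : ZMod n → Bool} (hx : InXs x) :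
    IsSteady n fun j : ℤ => x j where
  odd := hn
  periodic j := by simp
  avoids_lossy t i p hp := by
    have : NeZero n := ⟨hn.pos.ne'⟩
    rw [iterate_step_intCast, occurs_intCast]
    exact avoids_lossy_of_inXs hx t i p hp

/-- One of the patterns occurs at `i`; unfolds to a disjunction. -/
def OccursAny (y : ℤ → Bool) (i : ℤ) : List (List Cell) → Prop
  | [] => False
  | [q] => occurs y i q = true
  | q :: qs => occurs y i q = true ∨ OccursAny y i qs

theorem OccursAny.of_mem {y : ℤ → Bool} {i : ℤ} {q : List Cell} {qs : List (List Cell)}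
    (hq : q ∈ qs) (h : occurs y i q = true) : OccursAny y i qs := by
  induction qs with
  | nil => exact absurd hq List.not_mem_nil
  | cons q' qs ih =>
    obtain rfl | hq := List.mem_cons.1 hq
    · cases qs with
      | nil => exact h
      | cons => exact .inl h
    · cases qs with
      | nil => exact absurd hq List.not_mem_nil
      | cons => exact .inr (ih hq)

namespace IsSteady

variable {n : ℕ} {y : ℤ → Bool}

protected theorem step (hy : IsSteady n y) : IsSteady n (step y) where
  odd := hy.odd
  periodic j := by
    refine congrArg bfoLocal (funext fun k => ?_)
    rw [add_right_comm, add_sub_right_comm, hy.periodic]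
  avoids_lossy t := by simpa only [Function.iterate_succ_apply] using hy.avoids_lossy (t + 1)

theorem alternating_succ (hy : IsSteady n y) {i : ℤ}
    (h : ∀ j : ℕ, j < 6 → y (i + j + 1) = !y (i + j)) : y (i + 7) = !y (i + 6) := by
  have avoids₁ := hy.avoids_lossy 0 (i + 2) [I, O, I, O, I, I] (by simp [lossyPatterns])
  have avoids₂ := hy.avoids_lossy 0 i [O, I, O, I, O, I, O, O]
    (by simp [lossyPatterns])
  have h₀ := h 0
  have h₁ := h 1
  have h₂ := h 2
  have h₃ := h 3
  have h₄ := h 4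
  have h₅ := h 5
  cases hi : y i <;> simp_all [occurs, Cell.allows, add_assoc]

theorem exists_not_alternating (hy : IsSteady n y) (i : ℤ) :
    ∃ j : ℕ, j < 6 ∧ y (i + j + 1) = y (i + j) := by
  by_contra! h
  have alternating (k : ℕ) : ∀ j : ℕ, j < 6 → y (i + k + j + 1) = !y (i + k + j) := by
    induction k with
    | zero => simpa [Bool.eq_not] using h
    | succ k ih =>
      intro j hj
      obtain hj | rfl : j < 5 ∨ j = 5 := by omega
      · have := ih (j + 1) (by omega)
        grind
      · have := hy.alternating_succ ih
        grind
  have parity (k : ℕ) : y (i + k) = (y i ^^ decide (Odd k)) := by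
    induction k with
    | zero => simp
    | succ k ih =>
      have := alternating k 0 (by omega)
      push_cast at this ⊢
      rw [add_zero] at this
      rw [← add_assoc, this, ih]
      simp [Nat.odd_add_one, -Nat.not_odd_iff_even]
  simpa [hy.odd, hy.periodic i] using parity n

theorem avoids_forbidden (hy : IsSteady n y) : Avoids forbiddenPatterns y := by
  intro i p hp
  obtain ⟨j, hj, eq⟩ := hy.exists_not_alternating i
  rw [forbiddenPatterns, List.mem_cons, List.mem_cons] at hp
  obtain rfl | rfl | hp := hp
  · interval_cases j <;> simp_all [occurs, Cell.allows, add_assoc]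
  · interval_cases j <;> simp_all [occurs, Cell.allows, add_assoc]
  · exact hy.avoids_lossy 0 i p hp

/-- To find the successors of `p`, all extensions of it by `l` cells on the left and by `r` cells on
the right are examined. -/
theorem transition (hy : IsSteady n y) (l r : ℕ) {p : List Cell} {qs : List (List Cell)}
    (check : explore forbiddenPatterns (pad l r p) (fun _ v => fitsAny qs v) = true) {i j : ℤ}
    (hp : occurs y i p = true) (hj : j = i - l + 4 := by omega) : OccursAny (step y) j qs := by
  subst hj
  have fits_image := explore_sound hy.avoids_forbidden hy.step.avoids_forbidden check (i := i - l)
    ((occurs_pad ..).trans (by rwa [sub_add_cancel]))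
  obtain ⟨q, hq, fits_q⟩ := List.any_eq_true.1 fits_image
  exact OccursAny.of_mem hq (occurs_of_fits fits_q)

end IsSteady

/-! ### Blocks and their ends -/

/-- All cells in `[a, b)` have the value `c`. -/
def Run (y : ℤ → Bool) (c : Bool) (a b : ℤ) : Prop :=
  ∀ j, a ≤ j → j < b → y j = c

/-- A block of zeros on `[f, w)` followed by a block of ones on `[w, g)`, both maximal. -/
structure Block (y : ℤ → Bool) (f w g : ℤ) : Prop where
  left : y (f - 1) = true
  left_lt : f < w
  zeros : Run y false f w
  lt_right : w < g
  ones : Run y true w g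
  right : y g = false

/-- A block with an even number of zeros and an odd number of ones. -/
structure EvenOddBlock (y : ℤ → Bool) (f w g : ℤ) : Prop extends Block y f w g where
  even_zeros : Even (w - f)
  odd_ones : Odd (g - w)

/-- A block with an odd number of zeros and an even number of ones. -/
structure OddEvenBlock (y : ℤ → Bool) (f w g : ℤ) : Prop extends Block y f w g where
  odd_zeros : Odd (w - f)
  even_ones : Even (g - w)

/-- Keeps the number of unfolding steps of `grind` on long patterns small. -/
theorem occurs_cons₄ (y : ℤ → Bool) (i : ℤ) (a b c d : Cell) (p : List Cell) :
    occurs y i (a :: b :: c :: d :: p) = (a.allows (y i) && b.allows (y (i + 1)) &&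
      c.allows (y (i + 2)) && d.allows (y (i + 3)) && occurs y (i + 4) p) := by
  simp [occurs, add_assoc, Bool.and_assoc]

attribute [local grind =] Run occurs occurs_cons₄ OccursAny Cell.allows

theorem Run.lt_add_of_periodic {y : ℤ → Bool} {c : Bool} {a b m : ℤ} (h : Run y c a b) (hm : 0 < m)
    (periodic : Function.Periodic y m) {e : ℤ} (he : y e ≠ c) (hab : e = b ∨ e = a - 1) :
    b < a + m := by
  have := periodic e
  have := periodic (e - m)
  grind

namespace IsSteady

variable {n : ℕ} {y : ℤ → Bool} {f w g : ℤ}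

theorem zeros_step (hy : IsSteady n y) (h : Run y false f w) :
    Run (step y) false (f + 2) w := by
  intro j hf hw
  have : OccursAny (step y) j [[O]] :=
    hy.transition (i := j - 2) 2 4 (p := [O, O, O]) (by decide +kernel) (by grind)
  grind

theorem ones_step (hy : IsSteady n y) (h : Run y true w g) :
    Run (step y) true (w + 1) (g - 2) := by
  intro j hw hg
  have : OccursAny (step y) j [[I]] :=
    hy.transition (i := j - 1) 3 2 (p := [I, I, I, I]) (by decide +kernel) (by grind)
  grind

/-! ### An even number of zeros and an odd number of ones -/

theorem right_end_of_evenOddBlock (hy : IsSteady n y) (h : EvenOddBlock y f w g) :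
    ∃ g', w < g' ∧ Odd (g' - w) ∧ Run (step y) true w g' ∧ step y g' = false := by
  obtain ⟨⟨-, _, zeros, _, ones, right⟩, even_zeros, odd_ones⟩ := h
  have wide : f + 2 ≤ w := by grind
  obtain rfl | hgw : g = w + 1 ∨ w + 3 ≤ g := by grind
  · have image : OccursAny (step y) w [[I, O], [I, I, I, O]] :=
      hy.transition (i := w - 2) 2 7 (p := [O, O, I, O]) (by decide +kernel) (by grind)
    obtain image | image := image
    · exact ⟨w + 1, by grind⟩
    · exact ⟨w + 3, by grind⟩
  · have wall : OccursAny (step y) w [[I]] :=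
      hy.transition (i := w - 2) 2 2 (p := [O, O, I, I, I]) (by decide +kernel)
        (by grind)
    have tail : OccursAny (step y) (g - 2) [[O], [I, I, O], [I, I, I, I, O]] := by
      obtain rfl | hgw : g = w + 3 ∨ w + 5 ≤ g := by grind
      · exact hy.transition (i := w - 2) 1 6 (p := [O, O, I, I, I, O]) (by decide +kernel)
          (by grind)
      · exact hy.transition (i := g - 5) 1 6 (p := [I, I, I, I, I, O]) (by decide +kernel)
          (by grind)
    have body := hy.ones_step ones
    obtain tail | tail | tail := tail
    · exact ⟨g - 2, by grind⟩
    · exact ⟨g, by grind⟩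
    · exact ⟨g + 2, by grind⟩

/-- The cells left of a block end in `01`, and this `01` is a box. -/
def BoxBefore (y : ℤ → Bool) (f : ℤ) : Prop :=
  y (f - 3) = true ∧ y (f - 2) = false

theorem add_two_lt_of_not_boxBefore (hy : IsSteady n y) (h : EvenOddBlock y f w g)
    (hbox : ¬ BoxBefore y f) : f + 2 < w := by
  obtain ⟨⟨left, _, zeros, _, ones, right⟩, even_zeros, odd_ones⟩ := h
  by_contra hw
  obtain rfl : w = f + 2 := by grind
  obtain rfl | hgw : g = f + 3 ∨ f + 5 ≤ g := by grind
  · cases hf : y (f - 2)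
    · exact hy.transition (j := f + 1) (i := f - 3) (qs := []) 0 7 (p := [O, O, I, O, O, I, O])
        (by decide +kernel) (by grind [BoxBefore])
    · exact hy.transition (j := f + 2) (i := f - 2) (qs := []) 0 7 (p := [I, I, O, O, I, O])
        (by decide +kernel) (by grind)
  · cases hf : y (f - 2)
    · have := hy.avoids_forbidden (f - 3) [O, O, I, O, O, I, I, I]
        (by simp [forbiddenPatterns, lossyPatterns])
      grind [BoxBefore]
    · have := hy.avoids_forbidden (f - 2) [I, I, O, O, I, I, I]
        (by simp [forbiddenPatterns, lossyPatterns])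
      grind

theorem not_evenOddBlock_of_not_boxBefore (hy : IsSteady n y)
    (hbox : ¬ BoxBefore y f) : ¬ EvenOddBlock y f w g := by
  intro h
  induction hm : (w - f).toNat using Nat.strong_induction_on generalizing y f g with
  | _ m ih =>
    have wide := hy.add_two_lt_of_not_boxBefore h hbox
    obtain ⟨g', lt_right, odd_ones, ones, right⟩ := hy.right_end_of_evenOddBlock h
    obtain ⟨⟨left, left_lt, zeros, -, -, -⟩, even_zeros, -⟩ := h
    have image : OccursAny (step y) f [[I, I, O]] := by
      cases hf : y (f - 2)
      · have : OccursAny (step y) (f - 3) [[X, X, X, I, I, O]] :=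
          hy.transition (i := f - 3) 4 4 (p := [O, O, I, O, O, O]) (by decide +kernel)
            (by grind [BoxBefore])
        grind
      · have : OccursAny (step y) (f - 2) [[X, X, I, I, O]] :=
          hy.transition (i := f - 2) 4 4 (p := [I, I, O, O, O]) (by decide +kernel)
            (by grind)
        grind
    exact ih (w - (f + 2)).toNat (by omega) hy.step (f := f + 2) (by grind [BoxBefore])
      ⟨⟨by grind, by omega, hy.zeros_step zeros, lt_right, ones, right⟩, by grind, odd_ones⟩ rfl

theorem left_end_of_evenOddBlock (hy : IsSteady n y) (h : EvenOddBlock y f w g)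
    (hbox : BoxBefore y f) :
    ∃ f' < w, Even (w - f') ∧ step y (f' - 1) = true ∧ Run (step y) false f' w ∧
      (BoxBefore (step y) f' → f' = f - 2) := by
  obtain ⟨⟨left, left_lt, zeros, -, -, -⟩, even_zeros, -⟩ := h
  have image : OccursAny (step y) (f - 5) [[I, O, I, O, O, O, O], [X, I, I, O, O, O, O],
      [O, O, I, O, O, O, O], [X, X, X, I, I, O, O], [X, X, O, O, I, O, O]] :=
    hy.transition (i := f - 3) 6 4 (p := [I, O, I, O, O]) (by decide +kernel)
      (by grind [BoxBefore])
  have body := hy.zeros_step zeros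
  obtain image | image | image | image | image := image
  · exact ⟨f - 2, by grind⟩
  · exact ⟨f - 2, by grind⟩
  · exact ⟨f - 2, by grind⟩
  · exact ⟨f, by grind [BoxBefore]⟩
  · exact ⟨f, by grind [BoxBefore]⟩

theorem not_evenOddBlock (hy : IsSteady n y) (f w g : ℤ) : ¬ EvenOddBlock y f w g := by
  intro h
  induction hm : (n - (w - f)).toNat using Nat.strong_induction_on generalizing y f g with
  | _ m ih =>
    by_cases hbox : BoxBefore y f
    · have bound := h.zeros.lt_add_of_periodic (mod_cast hy.odd.pos) hy.periodic
        (ne_of_eq_of_ne h.left (by simp)) (.inr rfl)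
      obtain ⟨g', lt_right, odd_ones, ones, right⟩ := hy.right_end_of_evenOddBlock h
      obtain ⟨f', left_lt, even_zeros, left, zeros, hf'⟩ := hy.left_end_of_evenOddBlock h hbox
      have h' : EvenOddBlock (step y) f' w g' :=
        ⟨⟨left, left_lt, zeros, lt_right, ones, right⟩, even_zeros, odd_ones⟩
      by_cases hbox' : BoxBefore (step y) f'
      · exact ih (n - (w - f')).toNat (by grind) hy.step f' g' h' rfl
      · exact hy.step.not_evenOddBlock_of_not_boxBefore hbox' h'
    · exact hy.not_evenOddBlock_of_not_boxBefore hbox h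

/-! ### An odd number of zeros and an even number of ones -/

theorem left_end_of_oddEvenBlock (hy : IsSteady n y) (h : OddEvenBlock y f w g) :
    ∃ f' < w, Odd (w - f') ∧ step y (f' - 1) = true ∧ Run (step y) false f' w := by
  obtain ⟨⟨left, _, zeros, _, ones, right⟩, odd_zeros, even_ones⟩ := h
  obtain rfl | wide : w = f + 1 ∨ f + 3 ≤ w := by grind
  · obtain rfl | hgw : g = f + 3 ∨ f + 5 ≤ g := by grind
    · have image : OccursAny (step y) (f - 7) [[I, O, O, O, O, O, O, O], [X, X, I, O, O, O, O, O],
          [X, X, X, X, I, O, O, O], [X, X, X, X, X, X, I, O]] :=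
        hy.transition (i := f - 1) 10 1 (p := [I, O, I, I, O]) (by decide +kernel) (by grind)
      obtain image | image | image | image := image
      · exact ⟨f - 6, by grind⟩
      · exact ⟨f - 4, by grind⟩
      · exact ⟨f - 2, by grind⟩
      · exact ⟨f, by grind⟩
    · have image : OccursAny (step y) (f - 1) [[I, O]] :=
        hy.transition (i := f - 1) 4 0 (p := [I, O, I, I, I, I]) (by decide +kernel) (by grind)
      exact ⟨f, by grind⟩
  · have image : OccursAny (step y) (f - 5) [[I, O, O, O, O, O, O], [X, X, I, O, O, O, O],
        [X, X, X, X, I, O, O], [X, X, X, X, X, X, I, O]] :=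
      hy.transition (i := f - 1) 8 4 (p := [I, O, O, O]) (by decide +kernel) (by grind)
    have body := hy.zeros_step zeros
    obtain image | image | image | image := image
    · exact ⟨f - 4, by grind⟩
    · exact ⟨f - 2, by grind⟩
    · exact ⟨f, by grind⟩
    · exact ⟨f + 2, by grind⟩

theorem add_two_lt_of_oddEvenBlock (hy : IsSteady n y) (h : OddEvenBlock y f w g) : w + 2 < g := by
  by_contra hw
  obtain ⟨f', _, odd_zeros', left', zeros'⟩ := hy.left_end_of_oddEvenBlock h
  obtain ⟨⟨-, _, zeros, _, ones, right⟩, -, even_ones⟩ := h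
  have image : OccursAny (step y) w [[O, O, O, I, O]] :=
    hy.transition (i := w - 1) 3 6 (p := [O, I, I, O]) (by decide +kernel) (by grind)
  exact hy.step.not_evenOddBlock f' (w + 3) (w + 4)
    ⟨⟨left', by omega, by grind, by omega, by grind, by grind⟩, by grind, by grind⟩

/-- The cells right of a block begin with `01`, and this `01` is a box. -/
def BoxAfter (y : ℤ → Bool) (g : ℤ) : Prop :=
  occurs y g [O, I, O, O] = true

theorem right_end_of_oddEvenBlock (hy : IsSteady n y) (h : OddEvenBlock y f w g) :
    ∃ g' > w + 1, Even (g' - w) ∧ Run (step y) true (w + 1) g' ∧ step y g' = false ∧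
      (g' = g + 2 ∨ BoxAfter (step y) g') ∧ (BoxAfter y g → g' = g - 2) := by
  have hgw := hy.add_two_lt_of_oddEvenBlock h
  obtain ⟨⟨-, -, -, _, ones, right⟩, -, even_ones⟩ := h
  have body := hy.ones_step ones
  by_cases hbox : BoxAfter y g
  · have image : OccursAny (step y) (g - 3) [[I, O, I, O, O]] :=
      hy.transition (i := g - 4) 3 2 (p := [I, I, I, I, O, I, O, O]) (by decide +kernel)
        (by grind [BoxAfter])
    exact ⟨g - 2, by grind [BoxAfter]⟩
  · have image : OccursAny (step y) (g - 3) [[I, I, I, I, I, O], [I, O, I, O, O],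
        [I, I, I, O, I, O, O], [I, O, O, O, O, O, O, I, O]] :=
      hy.transition (i := g - 4) 3 9 (p := [I, I, I, I, O]) (by decide +kernel) (by grind)
    obtain image | image | image | image := image
    · exact ⟨g + 2, by grind⟩
    · exact ⟨g - 2, by grind [BoxAfter]⟩
    · exact ⟨g, by grind [BoxAfter]⟩
    · cases hy.step.not_evenOddBlock (g - 2) (g + 4) (g + 5)
        ⟨⟨by grind, by omega, by grind, by omega, by grind, by grind⟩, by grind, by grind⟩

theorem oddEvenBlock_step (hy : IsSteady n y) (h : OddEvenBlock y f w g) :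
    ∃ f' g', OddEvenBlock (step y) f' w g' ∧ (g' = g + 2 ∨ BoxAfter (step y) g') ∧
      (BoxAfter y g → g' = g - 2) := by
  obtain ⟨f', left_lt, odd_zeros, left, zeros⟩ := hy.left_end_of_oddEvenBlock h
  obtain ⟨g', lt_right, even_ones, ones, right, hg'⟩ := hy.right_end_of_oddEvenBlock h
  cases wall : step y w
  · cases hy.step.not_evenOddBlock f' (w + 1) g'
      ⟨⟨left, by omega, by grind, by omega, ones, right⟩, by grind, by grind⟩
  · exact ⟨f', g', ⟨⟨left, left_lt, zeros, by omega, by grind, right⟩, odd_zeros, even_ones⟩, hg'⟩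

theorem not_oddEvenBlock_of_boxAfter (hy : IsSteady n y) (hbox : BoxAfter y g) :
    ¬ OddEvenBlock y f w g := by
  intro h
  induction hm : (g - w).toNat using Nat.strong_induction_on generalizing y f g with
  | _ m ih =>
    obtain ⟨f', g', h', hg', hg⟩ := hy.oddEvenBlock_step h
    obtain rfl := hg hbox
    exact ih _ (by have := h'.lt_right; omega) hy.step (hg'.resolve_left (by omega)) h' rfl

theorem not_oddEvenBlock (hy : IsSteady n y) (f w g : ℤ) : ¬ OddEvenBlock y f w g := by
  intro h
  induction hm : (n - (g - w)).toNat using Nat.strong_induction_on generalizing y f g with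
  | _ m ih =>
    have bound := h.ones.lt_add_of_periodic (mod_cast hy.odd.pos) hy.periodic
      (ne_of_eq_of_ne h.right (by simp)) (.inl rfl)
    obtain ⟨f', g', h', rfl | hbox, -⟩ := hy.oddEvenBlock_step h
    · exact ih _ (by omega) hy.step _ _ h' rfl
    · exact hy.step.not_oddEvenBlock_of_boxAfter hbox h'

/-! ### Existence of a block of odd length -/

theorem not_block_of_odd (hy : IsSteady n y) (h : Block y f w g) : ¬ Odd (g - f) := by
  intro odd_length
  obtain even_zeros | odd_zeros := Int.even_or_odd (w - f)
  · exact hy.not_evenOddBlock f w g ⟨h, even_zeros, by grind⟩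
  · exact hy.not_oddEvenBlock f w g ⟨h, odd_zeros, by grind⟩

end IsSteady

/-- A descent from `1` to `0`, located at its `0`; blocks extend from one descent to the next. -/
def IsDescent (y : ℤ → Bool) (f : ℤ) : Prop :=
  y (f - 1) = true ∧ y f = false

theorem eq_true_of_forall_not_isDescent {y : ℤ → Bool} {a b : ℤ}
    (h : ∀ e, a < e → e ≤ b → ¬ IsDescent y e) (hab : a ≤ b) (ha : y a = true) : y b = true := by
  induction b, hab using Int.leInduction with
  | base => exact ha
  | succ b hab ih =>
    have not_descent := h (b + 1) (by omega) le_rfl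
    rw [IsDescent, add_sub_cancel_right] at not_descent
    simpa [ih fun e hae heb => h e hae (by omega)] using not_descent

theorem exists_block {y : ℤ → Bool} {f g : ℤ} (hfg : f < g) (hf : IsDescent y f)
    (hg : IsDescent y g) (h : ∀ e, f < e → e < g → ¬ IsDescent y e) : ∃ w, Block y f w g := by
  obtain ⟨w, ⟨hfw, hw⟩, w_le⟩ := Int.exists_least_of_bdd (P := fun j => f ≤ j ∧ y j = true)
    ⟨f, fun j hj => hj.1⟩ ⟨g - 1, by omega, hg.1⟩
  refine ⟨w, hf.1, by grind [IsDescent], by grind, ?_, fun j hwj hjg => ?_, hg.2⟩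
  · have := w_le (g - 1)
    grind [IsDescent]
  · exact eq_true_of_forall_not_isDescent (by grind) hwj hw

theorem exists_consecutive_descents {y : ℤ → Bool} {f : ℤ} {d : ℕ} (hd : Odd d)
    (hf : IsDescent y f) (hfd : IsDescent y (f + d)) :
    ∃ f g, f < g ∧ Odd (g - f) ∧ IsDescent y f ∧ IsDescent y g ∧
      ∀ e, f < e → e < g → ¬ IsDescent y e := by
  induction d using Nat.strong_induction_on generalizing f with
  | _ d ih =>
    by_cases h : ∃ e, f < e ∧ e < f + d ∧ IsDescent y e
    · obtain ⟨e, hfe, hed, he⟩ := h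
      obtain odd_left | even_left := (Int.even_or_odd (e - f)).symm
      · exact ih (e - f).toNat (by omega) (by grind) hf (by grind)
      · exact ih (f + d - e).toNat (by omega) (by grind) he (by grind)
    · push Not at h
      exact ⟨f, f + d, by grind, by grind, hf, hfd, h⟩

theorem exists_isDescent {y : ℤ → Bool} {m : ℤ} (hm : 0 < m) (hy : Function.Periodic y m) {a b : ℤ}
    (ha : y a = true) (hb : y b = false) : ∃ f, IsDescent y f := by
  by_contra! h
  obtain ⟨k, hk⟩ : ∃ k : ℕ, a ≤ b + k * m :=
    ⟨(a - b).toNat, by nlinarith [Int.self_le_toNat (a - b)]⟩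
  have := eq_true_of_forall_not_isDescent (fun e _ _ => h e) hk ha
  have := hy.nat_mul k b
  simp_all

theorem IsSteady.apply_eq_apply {n : ℕ} {y : ℤ → Bool} (hy : IsSteady n y) (a b : ℤ) :
    y a = y b := by
  by_contra hab
  obtain ⟨a, b, ha, hb⟩ : ∃ a b, y a = true ∧ y b = false := by
    cases ha : y a
    · exact ⟨b, a, by grind⟩
    · exact ⟨a, b, by grind⟩
  obtain ⟨f, hf⟩ := exists_isDescent (mod_cast hy.odd.pos) hy.periodic ha hb
  have hfn : IsDescent y (f + n) := by
    have := hy.periodic (f - 1)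
    have := hy.periodic f
    grind [IsDescent]
  obtain ⟨f, g, hfg, odd_length, hf, hg, h⟩ := exists_consecutive_descents hy.odd hf hfn
  obtain ⟨w, block⟩ := exists_block hfg hf hg h
  exact hy.not_block_of_odd block odd_length

end BFO

theorem Xs_no_orderedBlock_general {n : ℕ} (hn : Odd n) {x : ZMod n → Bool} (hx : InXs x)
    (i j : ZMod n) : x i = x j := by
  obtain ⟨a, rfl⟩ := ZMod.intCast_surjective i
  obtain ⟨b, rfl⟩ := ZMod.intCast_surjective j
  exact (BFO.isSteady_of_inXs hn hx).apply_eq_apply a b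

/-- A configuration in `X_s` contains no ordered block. -/
theorem Xs_no_orderedBlock (n : ℕ) (hn : Odd n) (x : ZMod n → Bool)
    (hx : InXs x) :
    ¬ ∃ (i : ZMod n) (k : ℕ), IsOrderedBlock x i k := by
  rintro ⟨i, k, -, ⟨zero, one⟩, -, -⟩
  simpa [zero, one] using Xs_no_orderedBlock_general hn hx i (i + 1)
end
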